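/- Let n, m ≥ 1 and g : Fin n × Fin m → ℝ with g ≥ 0. For every w : Fin n × Fin m → ℝ, TV_{1,π/4,g}(w) = sup_{v ∈ K} ⟨w, v⟩, where K = { div(g·ξ) + div'(g·η) : ξ, η ∈ A } with A the set of pairs of fields bounded pointwise by 1, and div, div' the negative adjoints of the axis and diagonal discrete gradients respectively. -/

import Mathlib

/-- Discrete gradient in the x-direction with Neumann boundary conditions. -/
def gradX {n m : ℕ} (u : Fin n × Fin m → ℝ) (q : Fin n × Fin m) : ℝ :=
  if h : (q.1 : ℕ) + 1 < n then u (⟨(q.1 : ℕ) + 1, h⟩, q.2) - u q else 0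

/-- Discrete gradient in the y-direction with Neumann boundary conditions. -/
def gradY {n m : ℕ} (u : Fin n × Fin m → ℝ) (q : Fin n × Fin m) : ℝ :=
  if h : (q.2 : ℕ) + 1 < m then u (q.1, ⟨(q.2 : ℕ) + 1, h⟩) - u q else 0

/-- Discrete diagonal gradient (direction (1,1)) with Neumann boundary conditions. -/
noncomputable def gradXY {n m : ℕ} (u : Fin n × Fin m → ℝ) (q : Fin n × Fin m) : ℝ :=
  if h : (q.1 : ℕ) + 1 < n ∧ (q.2 : ℕ) + 1 < m then
    (Real.sqrt 2)⁻¹ * (u (⟨(q.1 : ℕ) + 1, h.1⟩, ⟨(q.2 : ℕ) + 1, h.2⟩) - u q)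
  else 0

/-- Discrete diagonal gradient (direction (-1,1)) with Neumann boundary conditions. -/
noncomputable def gradYX {n m : ℕ} (u : Fin n × Fin m → ℝ) (q : Fin n × Fin m) : ℝ :=
  if h : 0 < (q.1 : ℕ) ∧ (q.2 : ℕ) + 1 < m then
    (Real.sqrt 2)⁻¹ *
      (u (⟨(q.1 : ℕ) - 1, lt_of_le_of_lt (Nat.sub_le _ _) q.1.isLt⟩,
          ⟨(q.2 : ℕ) + 1, h.2⟩) - u q)
  else 0

/-- The g-weighted Manhattan total variation with diagonal terms. -/
noncomputable def wTV {n m : ℕ} (g : Fin n × Fin m → ℝ) (u : Fin n × Fin m → ℝ) : ℝ :=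
  (1 / 2) * ∑ q : Fin n × Fin m,
    g q * (|gradX u q| + |gradY u q| + |gradXY u q| + |gradYX u q|)

/-- The discrete divergence: the negative adjoint of the gradient `(∇ˣ, ∇ʸ)`. -/
def divv {n m : ℕ} (px py : Fin n × Fin m → ℝ) (q : Fin n × Fin m) : ℝ :=
  (if (q.1 : ℕ) + 1 < n then px q else 0) -
    (if 0 < (q.1 : ℕ) then
      px (⟨(q.1 : ℕ) - 1, lt_of_le_of_lt (Nat.sub_le _ _) q.1.isLt⟩, q.2) else 0) +
  (if (q.2 : ℕ) + 1 < m then py q else 0) -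
    (if 0 < (q.2 : ℕ) then
      py (q.1, ⟨(q.2 : ℕ) - 1, lt_of_le_of_lt (Nat.sub_le _ _) q.2.isLt⟩) else 0)

/-- The diagonal discrete divergence: the negative adjoint of the diagonal
gradient pair `(∇^{xy}, ∇^{yx})`. -/
noncomputable def divv' {n m : ℕ} (f1 f2 : Fin n × Fin m → ℝ) (q : Fin n × Fin m) : ℝ :=
  (Real.sqrt 2)⁻¹ *
    ((if (q.1 : ℕ) + 1 < n ∧ (q.2 : ℕ) + 1 < m then f1 q else 0) -
      (if 0 < (q.1 : ℕ) ∧ 0 < (q.2 : ℕ) then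
        f1 (⟨(q.1 : ℕ) - 1, lt_of_le_of_lt (Nat.sub_le _ _) q.1.isLt⟩,
            ⟨(q.2 : ℕ) - 1, lt_of_le_of_lt (Nat.sub_le _ _) q.2.isLt⟩) else 0) +
      (if 0 < (q.1 : ℕ) ∧ (q.2 : ℕ) + 1 < m then f2 q else 0) -
      (if h : (q.1 : ℕ) + 1 < n ∧ 0 < (q.2 : ℕ) then
        f2 (⟨(q.1 : ℕ) + 1, h.1⟩,
            ⟨(q.2 : ℕ) - 1, lt_of_le_of_lt (Nat.sub_le _ _) q.2.isLt⟩) else 0))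

/-!
Each of the four gradients is, up to a constant, the difference operator along a partial bijection
of the pixel grid: a partial shift of `Fin n` or `Fin m`, undefined where it would leave the grid,
in each coordinate. Reindexing a sum along the partial bijection is summation by parts, and it
yields the divergences as negative adjoints. Hence the pairing of `w` with an element of `K` is a
sum of pairings of its gradients with weighted fields from the unit box, which are maximised
independently, by fields of signs; the maxima are weighted `ℓ¹` norms.
-/

theorem option_elim_zero_eq_sum {α M : Type*} [Fintype α] [DecidableEq α] [AddCommMonoid M]
    (o : Option α) (f : α → M) : o.elim 0 f = ∑ a, if a ∈ o then f a else 0 := by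
  cases o <;> simp

theorem sum_elim_eq_sum_elim_symm {α β M : Type*} [Fintype α] [Fintype β] [AddCommMonoid M]
    (e : α ≃. β) (F : α → β → M) :
    ∑ a, (e a).elim 0 (F a) = ∑ b, (e.symm b).elim 0 fun a => F a b := by
  classical
  simp only [option_elim_zero_eq_sum, e.mem_iff_mem]
  exact Finset.sum_comm

/-- The product of two partial bijections, defined at the pairs at both of whose coordinates the
factors are. -/
def prodPEquiv {α β γ δ : Type*} (e : α ≃. γ) (f : β ≃. δ) : α × β ≃. γ × δ where
  toFun q := Option.map₂ Prod.mk (e q.1) (f q.2)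
  invFun q := Option.map₂ Prod.mk (e.symm q.1) (f.symm q.2)
  inv := by
    rintro ⟨a, b⟩ ⟨c, d⟩
    simp [e.mem_iff_mem, f.mem_iff_mem]

theorem prodPEquiv_apply {α β γ δ : Type*} (e : α ≃. γ) (f : β ≃. δ) (q : α × β) :
    prodPEquiv e f q = Option.map₂ Prod.mk (e q.1) (f q.2) :=
  rfl

theorem prodPEquiv_symm {α β γ δ : Type*} (e : α ≃. γ) (f : β ≃. δ) :
    (prodPEquiv e f).symm = prodPEquiv e.symm f.symm :=
  rfl

/-- The shift `i ↦ i + 1` of `Fin n`, undefined at the last element; it encodes the Neumann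
boundary condition. -/
def finShift (n : ℕ) : Fin n ≃. Fin n where
  toFun i := if h : (i : ℕ) + 1 < n then some ⟨i + 1, h⟩ else none
  invFun i := if 0 < (i : ℕ) then some ⟨i - 1, by omega⟩ else none
  inv := by
    intro i j
    simp only [Option.ite_none_right_eq_some, Option.some.injEq, Fin.ext_iff,
      Option.dite_none_right_eq_some, exists_prop]
    omega

theorem finShift_apply {n : ℕ} (i : Fin n) :
    finShift n i = if h : (i : ℕ) + 1 < n then some ⟨i + 1, h⟩ else none :=
  rfl

theorem finShift_symm_apply {n : ℕ} (i : Fin n) :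
    (finShift n).symm i = if 0 < (i : ℕ) then some ⟨i - 1, by omega⟩ else none :=
  rfl

section DifferenceOperators

variable {ι R : Type*}

/-- The difference operator along a partial bijection `e`, with value `0` where `e` is
undefined. -/
def diffAlong [AddGroup R] (e : ι ≃. ι) (u : ι → R) (i : ι) : R :=
  (e i).elim 0 fun j => u j - u i

/-- The divergence along a partial bijection `e`, i.e. the negative adjoint of `diffAlong e`. -/
def divAlong [AddGroup R] (e : ι ≃. ι) (p : ι → R) (i : ι) : R :=
  ((e i).elim 0 fun _ => p i) - (e.symm i).elim 0 p

theorem dotProduct_divAlong [Fintype ι] [NonUnitalNonAssocRing R] (e : ι ≃. ι) (w p : ι → R) :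
    w ⬝ᵥ divAlong e p = -(diffAlong e w ⬝ᵥ p) := by
  have mul_elim (a : R) (o : Option ι) (f : ι → R) :
      a * o.elim 0 f = o.elim 0 fun j => a * f j := by
    cases o <;> simp
  have shifted_sum : ∑ i, (e.symm i).elim 0 (fun j => w i * p j) =
      ∑ j, (e j).elim 0 fun i => w i * p j :=
    (sum_elim_eq_sum_elim_symm e fun j i => w i * p j).symm
  simp only [dotProduct, divAlong, mul_sub, Finset.sum_sub_distrib, mul_elim, shifted_sum]
  rw [← Finset.sum_sub_distrib, ← Finset.sum_neg_distrib]
  refine Finset.sum_congr rfl fun i _ => ?_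
  cases h : e i <;> simp [diffAlong, h, sub_mul]

end DifferenceOperators

section Grid

variable {n m : ℕ}

theorem gradX_eq_diffAlong (u : Fin n × Fin m → ℝ) :
    gradX u = diffAlong (prodPEquiv (finShift n) (.refl _)) u := by
  ext q
  simp only [gradX, diffAlong, prodPEquiv_apply, finShift_apply, PEquiv.refl_apply]
  split_ifs <;> rfl

theorem gradY_eq_diffAlong (u : Fin n × Fin m → ℝ) :
    gradY u = diffAlong (prodPEquiv (.refl _) (finShift m)) u := by
  ext q
  simp only [gradY, diffAlong, prodPEquiv_apply, finShift_apply, PEquiv.refl_apply]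
  split_ifs <;> rfl

theorem gradXY_eq_smul_diffAlong (u : Fin n × Fin m → ℝ) :
    gradXY u = (√2)⁻¹ • diffAlong (prodPEquiv (finShift n) (finShift m)) u := by
  ext q
  simp only [gradXY, diffAlong, prodPEquiv_apply, finShift_apply, Pi.smul_apply]
  split_ifs <;> simp_all

theorem gradYX_eq_smul_diffAlong (u : Fin n × Fin m → ℝ) :
    gradYX u = (√2)⁻¹ • diffAlong (prodPEquiv (finShift n).symm (finShift m)) u := by
  ext q
  simp only [gradYX, diffAlong, prodPEquiv_apply, finShift_apply, finShift_symm_apply,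
    Pi.smul_apply]
  split_ifs <;> simp_all

theorem divv_eq_divAlong_add_divAlong (px py : Fin n × Fin m → ℝ) :
    divv px py = divAlong (prodPEquiv (finShift n) (.refl _)) px +
      divAlong (prodPEquiv (.refl _) (finShift m)) py := by
  ext q
  simp only [divv, divAlong, prodPEquiv_symm, prodPEquiv_apply, finShift_apply, finShift_symm_apply,
    PEquiv.symm_refl, PEquiv.refl_apply, Pi.add_apply, add_sub_assoc]
  congr 2 <;> split_ifs <;> rfl

theorem divv'_eq_smul_divAlong_add_divAlong (f₁ f₂ : Fin n × Fin m → ℝ) :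
    divv' f₁ f₂ = (√2)⁻¹ • (divAlong (prodPEquiv (finShift n) (finShift m)) f₁ +
      divAlong (prodPEquiv (finShift n).symm (finShift m)) f₂) := by
  ext q
  simp only [divv', divAlong, prodPEquiv_symm, PEquiv.symm_symm, prodPEquiv_apply, finShift_apply,
    finShift_symm_apply, Pi.smul_apply, Pi.add_apply, smul_eq_mul, add_sub_assoc]
  congr 3 <;> split_ifs <;> simp_all

theorem dotProduct_divv (w px py : Fin n × Fin m → ℝ) :
    w ⬝ᵥ divv px py = -(gradX w ⬝ᵥ px + gradY w ⬝ᵥ py) := by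
  rw [divv_eq_divAlong_add_divAlong, dotProduct_add, dotProduct_divAlong, dotProduct_divAlong,
    gradX_eq_diffAlong, gradY_eq_diffAlong, neg_add]

theorem dotProduct_divv' (w f₁ f₂ : Fin n × Fin m → ℝ) :
    w ⬝ᵥ divv' f₁ f₂ = -(gradXY w ⬝ᵥ f₁ + gradYX w ⬝ᵥ f₂) := by
  rw [divv'_eq_smul_divAlong_add_divAlong, dotProduct_smul, dotProduct_add, dotProduct_divAlong,
    dotProduct_divAlong, gradXY_eq_smul_diffAlong, gradYX_eq_smul_diffAlong, smul_dotProduct,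
    smul_dotProduct, ← neg_add, smul_neg, smul_add]

end Grid

theorem isGreatest_dotProduct_mul_box {ι R : Type*} [Fintype ι] [CommRing R] [LinearOrder R]
    [IsStrictOrderedRing R] {g : ι → R} (hg : ∀ i, 0 ≤ g i) (f : ι → R) :
    IsGreatest {x | ∃ ξ : ι → R, (∀ i, |ξ i| ≤ 1) ∧ x = f ⬝ᵥ (g * ξ)} (∑ i, g i * |f i|) := by
  constructor
  · have abs_sign_le_one (s : SignType) : |(s : R)| ≤ 1 := by cases s <;> simp
    refine ⟨fun i => SignType.sign (f i), fun i => abs_sign_le_one _,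
      Finset.sum_congr rfl fun i _ => ?_⟩
    rw [Pi.mul_apply, mul_left_comm, self_mul_sign]
  · rintro _ ⟨ξ, hξ, rfl⟩
    refine Finset.sum_le_sum fun i _ => ?_
    have mul_le_abs : f i * ξ i ≤ |f i| :=
      calc f i * ξ i ≤ |f i| * |ξ i| := (le_abs_self _).trans_eq (abs_mul _ _)
        _ ≤ |f i| := mul_le_of_le_one_right (abs_nonneg _) (hξ i)
    calc f i * (g i * ξ i) = g i * (f i * ξ i) := mul_left_comm ..
      _ ≤ g i * |f i| := mul_le_mul_of_nonneg_left mul_le_abs (hg i)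

theorem wTV_eq_half_sum {n m : ℕ} (g u : Fin n × Fin m → ℝ) :
    wTV g u = 1 / 2 * (∑ q, g q * |gradX u q| + ∑ q, g q * |gradY u q| +
      ∑ q, g q * |gradXY u q| + ∑ q, g q * |gradYX u q|) := by
  simp only [wTV, mul_add, Finset.sum_add_distrib]

theorem dotProduct_half_divv_add_divv' {n m : ℕ} (w px py f₁ f₂ : Fin n × Fin m → ℝ) :
    ∑ q, w q * (1 / 2 * (divv px py q + divv' f₁ f₂ q)) =
      1 / 2 * (-gradX w ⬝ᵥ px + -gradY w ⬝ᵥ py + -gradXY w ⬝ᵥ f₁ + -gradYX w ⬝ᵥ f₂) := by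
  calc ∑ q, w q * (1 / 2 * (divv px py q + divv' f₁ f₂ q))
      = w ⬝ᵥ ((1 / 2 : ℝ) • (divv px py + divv' f₁ f₂)) := rfl
    _ = 1 / 2 * (w ⬝ᵥ divv px py + w ⬝ᵥ divv' f₁ f₂) := by
      rw [dotProduct_smul, dotProduct_add, smul_eq_mul]
    _ = 1 / 2 * (-gradX w ⬝ᵥ px + -gradY w ⬝ᵥ py + -gradXY w ⬝ᵥ f₁ + -gradYX w ⬝ᵥ f₂) := by
      simp only [dotProduct_divv, dotProduct_divv', neg_dotProduct]
      ring

/-- Duality formula: the weighted Manhattan TV with diagonal terms is the support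
function of the convex set `K = {(1/2)(div(g·ξ) + div'(g·η)) : ξ, η ∈ A}`. -/
theorem wTV_eq_sup_over_K (n m : ℕ) (hn : 1 ≤ n) (hm : 1 ≤ m)
    (g : Fin n × Fin m → ℝ) (hg : ∀ q, 0 ≤ g q)
    (w : Fin n × Fin m → ℝ) :
    IsLUB {x : ℝ | ∃ ξx ξy ηx ηy : Fin n × Fin m → ℝ,
        (∀ q, |ξx q| ≤ 1) ∧ (∀ q, |ξy q| ≤ 1) ∧
        (∀ q, |ηx q| ≤ 1) ∧ (∀ q, |ηy q| ≤ 1) ∧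
        x = ∑ q : Fin n × Fin m,
          w q * ((1 / 2) * (divv (fun r => g r * ξx r) (fun r => g r * ξy r) q +
            divv' (fun r => g r * ηx r) (fun r => g r * ηy r) q))}
      (wTV g w) := by
  have box_max (f : Fin n × Fin m → ℝ) :
      IsGreatest {x | ∃ ξ : Fin n × Fin m → ℝ, (∀ q, |ξ q| ≤ 1) ∧ x = -f ⬝ᵥ (g * ξ)}
        (∑ q, g q * |f q|) := by
    simpa only [Pi.neg_apply, abs_neg] using isGreatest_dotProduct_mul_box hg (-f)
  refine IsGreatest.isLUB ⟨?_, ?_⟩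
  · obtain ⟨ξx, hξx, maxX⟩ := (box_max (gradX w)).1
    obtain ⟨ξy, hξy, maxY⟩ := (box_max (gradY w)).1
    obtain ⟨ηx, hηx, maxXY⟩ := (box_max (gradXY w)).1
    obtain ⟨ηy, hηy, maxYX⟩ := (box_max (gradYX w)).1
    refine ⟨ξx, ξy, ηx, ηy, hξx, hξy, hηx, hηy, ?_⟩
    rw [wTV_eq_half_sum, maxX, maxY, maxXY, maxYX, dotProduct_half_divv_add_divv']
    rfl
  · rintro _ ⟨ξx, ξy, ηx, ηy, hξx, hξy, hηx, hηy, rfl⟩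
    rw [dotProduct_half_divv_add_divv', wTV_eq_half_sum]
    gcongr
    · exact (box_max (gradX w)).2 ⟨ξx, hξx, rfl⟩
    · exact (box_max (gradY w)).2 ⟨ξy, hξy, rfl⟩
    · exact (box_max (gradXY w)).2 ⟨ηx, hηx, rfl⟩
    · exact (box_max (gradYX w)).2 ⟨ηy, hηy, rfl⟩
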